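/- Let ℓ > 0, T > 0, and let u, v, q : [0,T] × ℝ → ℝ be C¹ in t and C¹ in ξ with continuous mixed partial derivatives, with q ≥ 0 bounded and (t,ξ) ↦ q(t,ξ) sin²(v(t,ξ)/2) integrable in ξ uniformly in t. Suppose they satisfy, pointwise, the semilinear system u_t = −ℓ² P_x, v_t = −P(1 + cos v) − sin²(v/2), q_t = q(½ − P) sin v, where for each t, P(t,·) and P_x(t,·) are given by the Lagrangian integral formulas P(t,ξ) = (1/(4ℓ)) ∫_ℝ exp(−(1/ℓ)|∫_ξ^{ξ'} q(t,s) cos²(v(t,s)/2) ds|) q(t,ξ') sin²(v(t,ξ')/2) dξ' and P_x(t,ξ) = (1/(4ℓ²)) (∫_ξ^{+∞} − ∫_{−∞}^{ξ}) exp(−(1/ℓ)|∫_ξ^{ξ'} q(t,s) cos²(v(t,s)/2) ds|) q(t,ξ') sin²(v(t,ξ')/2) dξ'. If u_ξ(0,ξ) = ½ q(0,ξ) sin v(0,ξ) for all ξ, then u_ξ(t,ξ) = ½ q(t,ξ) sin v(t,ξ) for all (t,ξ) ∈ [0,T] × ℝ. Moreover, if additionally y : [0,T] × ℝ → ℝ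 satisfies y_t = u and y_ξ(0,ξ) = q(0,ξ) cos²(v(0,ξ)/2), then y_ξ(t,ξ) = q(t,ξ) cos²(v(t,ξ)/2) for all (t,ξ). -/

import Mathlib

/-!
The result rests on two computations.

For fixed time, put `E x = ∫ s in 0..x, q s * cos² (v s / 2)`. As `q ≥ 0`, `E` is monotone, so the
absolute value in the kernel can be resolved on each side of `ξ`, and the two halves of the nonlocal
integral factor as `A = e^{E/ℓ} ∫_{Ioi ξ} e^{-E/ℓ} h` and `B = e^{-E/ℓ} ∫_{Iio ξ} e^{E/ℓ} h`, where
`h = q sin² (v / 2)`. Since `A' = (E'/ℓ) A - h`, `B' = -(E'/ℓ) B + h` and `A + B = 4 ℓ P`, this gives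
`ℓ² (P_x)_ξ = P q cos² (v / 2) - h / 2` (`hasDerivAt_lagPx`).

Hence `u_{tξ} = q (sin² (v / 2) / 2 - P cos² (v / 2))`, and the equations for `v_t` and `q_t` with
the half-angle formulas show that `½ q sin v` has the same time derivative. The difference
`u_ξ - ½ q sin v` is therefore constant in time, and it vanishes initially. In the same way
`(q cos² (v / 2))_t = ½ q sin v = u_ξ = (y_ξ)_t`.
-/

open MeasureTheory Set Filter

/-- The integrand of the Lagrangian expressions (4.14)–(4.15) for the nonlocal terms of the
regularised Burgers equation. -/
noncomputable def lagK (ℓ : ℝ) (v q : ℝ → ℝ) (ξ ξ' : ℝ) : ℝ :=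
  Real.exp (-(1 / ℓ) * |∫ s in ξ..ξ', q s * Real.cos (v s / 2) ^ 2|) *
    (q ξ' * Real.sin (v ξ' / 2) ^ 2)

/-- The nonlocal term `P` in Lagrangian variables (formula (4.14)). -/
noncomputable def lagP (ℓ : ℝ) (v q : ℝ → ℝ) (ξ : ℝ) : ℝ :=
  (1 / (4 * ℓ)) * ∫ ξ' : ℝ, lagK ℓ v q ξ ξ'

/-- The nonlocal term `P_x` in Lagrangian variables (formula (4.15)). -/
noncomputable def lagPx (ℓ : ℝ) (v q : ℝ → ℝ) (ξ : ℝ) : ℝ :=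
  (1 / (4 * ℓ ^ 2)) *
    ((∫ ξ' in Set.Ioi ξ, lagK ℓ v q ξ ξ') - ∫ ξ' in Set.Iio ξ, lagK ℓ v q ξ ξ')

lemma hasDerivAt_integral_Ioi {F : ℝ → ℝ} (hF : Continuous F)
    (hi : ∀ x, IntegrableOn F (Ioi x)) (ξ : ℝ) :
    HasDerivAt (fun x => ∫ s in Ioi x, F s) (-F ξ) ξ := by
  have h : (fun x => ∫ s in Ioi x, F s) = fun x => (∫ s in Ioi 0, F s) - ∫ s in (0:ℝ)..x, F s := by
    funext x
    rw [← intervalIntegral.integral_interval_add_Ioi (hi 0) (hi x)]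
    ring
  rw [h]
  exact (intervalIntegral.integral_hasDerivAt_right (hF.intervalIntegrable _ _)
    (hF.stronglyMeasurableAtFilter _ _) hF.continuousAt).const_sub _

lemma hasDerivAt_integral_Iio {F : ℝ → ℝ} (hF : Continuous F)
    (hi : ∀ x, IntegrableOn F (Iio x)) (ξ : ℝ) :
    HasDerivAt (fun x => ∫ s in Iio x, F s) (F ξ) ξ := by
  have hi' : ∀ x, IntegrableOn F (Iic x) := fun x =>
    (integrableOn_Iic_iff_integrableOn_Iio (by simp)).2 (hi x)
  have h : (fun x => ∫ s in Iio x, F s) = fun x => (∫ s in Iio 0, F s) + ∫ s in (0:ℝ)..x, F s := by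
    funext x
    rw [← integral_Iic_eq_integral_Iio, ← integral_Iic_eq_integral_Iio,
      ← intervalIntegral.integral_Iic_sub_Iic (hi' 0) (hi' x)]
    ring
  rw [h]
  exact (intervalIntegral.integral_hasDerivAt_right (hF.intervalIntegrable _ _)
    (hF.stronglyMeasurableAtFilter _ _) hF.continuousAt).const_add _

/-- The Lagrangian form of the elliptic identity `P - ℓ² P_xx = ½ u_x²`:
`ℓ² (P_x)_ξ = P q cos² (v / 2) - ½ q sin² (v / 2)`. -/
lemma hasDerivAt_lagPx {ℓ : ℝ} (hℓ : 0 < ℓ) {v q : ℝ → ℝ} (hv : Continuous v) (hq : Continuous q)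
    (hq0 : ∀ x, 0 ≤ q x) (hint : Integrable fun x => q x * Real.sin (v x / 2) ^ 2) (ξ : ℝ) :
    HasDerivAt (lagPx ℓ v q)
      ((1 / ℓ ^ 2) * (lagP ℓ v q ξ * (q ξ * Real.cos (v ξ / 2) ^ 2)
        - q ξ * Real.sin (v ξ / 2) ^ 2 / 2)) ξ := by
  set e : ℝ → ℝ := fun s => q s * Real.cos (v s / 2) ^ 2 with he
  set h : ℝ → ℝ := fun s => q s * Real.sin (v s / 2) ^ 2 with hh
  have hec : Continuous e := by fun_prop
  have hhc : Continuous h := by fun_prop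
  have he0 : ∀ x, 0 ≤ e x := fun x => mul_nonneg (hq0 x) (sq_nonneg _)
  have hh0 : ∀ x, 0 ≤ h x := fun x => mul_nonneg (hq0 x) (sq_nonneg _)
  set E : ℝ → ℝ := fun x => ∫ s in (0:ℝ)..x, e s with hE
  have hEd : ∀ x, HasDerivAt E (e x) x := fun x =>
    intervalIntegral.integral_hasDerivAt_right (hec.intervalIntegrable _ _)
      (hec.stronglyMeasurableAtFilter _ _) hec.continuousAt
  have hEc : Continuous E := continuous_iff_continuousAt.2 fun x => (hEd x).continuousAt
  have hsub : ∀ x y, ∫ s in x..y, e s = E y - E x := fun x y =>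
    (intervalIntegral.integral_interval_sub_left (hec.intervalIntegrable _ _)
      (hec.intervalIntegrable _ _)).symm
  have hmono : Monotone E := fun x y hxy => by
    have := intervalIntegral.integral_nonneg (μ := volume) hxy fun s _ => he0 s
    rw [hsub] at this
    linarith
  set F : ℝ → ℝ := fun x => Real.exp (-(E x / ℓ)) * h x with hF
  set G : ℝ → ℝ := fun x => Real.exp (E x / ℓ) * h x with hG
  have hFc : Continuous F := by fun_prop
  have hGc : Continuous G := by fun_prop
  -- On `Ioi x` the weight `e^{-E/ℓ}` is at most its value at `x`, so no global bound on `E` is needed;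
  -- likewise for `e^{E/ℓ}` on `Iio x`.
  have hFi : ∀ x, IntegrableOn F (Ioi x) := fun x => by
    refine Integrable.mono' (hint.integrableOn.const_mul (Real.exp (-(E x / ℓ))))
      hFc.aestronglyMeasurable ((ae_restrict_iff' measurableSet_Ioi).2 (.of_forall fun y hy => ?_))
    have hxy : E x / ℓ ≤ E y / ℓ := div_le_div_of_nonneg_right (hmono (le_of_lt hy)) hℓ.le
    rw [Real.norm_of_nonneg (mul_nonneg (Real.exp_pos _).le (hh0 y))]
    exact mul_le_mul_of_nonneg_right (Real.exp_le_exp.2 (by linarith)) (hh0 y)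
  have hGi : ∀ x, IntegrableOn G (Iio x) := fun x => by
    refine Integrable.mono' (hint.integrableOn.const_mul (Real.exp (E x / ℓ)))
      hGc.aestronglyMeasurable ((ae_restrict_iff' measurableSet_Iio).2 (.of_forall fun y hy => ?_))
    have hxy : E y / ℓ ≤ E x / ℓ := div_le_div_of_nonneg_right (hmono (le_of_lt hy)) hℓ.le
    rw [Real.norm_of_nonneg (mul_nonneg (Real.exp_pos _).le (hh0 y))]
    exact mul_le_mul_of_nonneg_right (Real.exp_le_exp.2 hxy) (hh0 y)
  have hKr : ∀ x, ∀ y ∈ Ioi x, lagK ℓ v q x y = Real.exp (E x / ℓ) * F y := fun x y hy => by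
    have hxy := hmono (le_of_lt hy)
    change Real.exp (-(1 / ℓ) * |∫ s in x..y, e s|) * h y = _
    rw [hsub, abs_of_nonneg (by linarith)]
    simp only [hF]
    rw [← mul_assoc (Real.exp _) (Real.exp _), ← Real.exp_add]
    congr 2
    ring
  have hKl : ∀ x, ∀ y ∈ Iio x, lagK ℓ v q x y = Real.exp (-(E x / ℓ)) * G y := fun x y hy => by
    have hxy := hmono (le_of_lt hy)
    change Real.exp (-(1 / ℓ) * |∫ s in x..y, e s|) * h y = _
    rw [hsub, abs_of_nonpos (by linarith)]
    simp only [hG]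
    rw [← mul_assoc (Real.exp _) (Real.exp _), ← Real.exp_add]
    congr 2
    ring
  have hA : ∀ x, ∫ y in Ioi x, lagK ℓ v q x y = Real.exp (E x / ℓ) * ∫ y in Ioi x, F y :=
    fun x => by rw [setIntegral_congr_fun measurableSet_Ioi (hKr x), integral_const_mul]
  have hB : ∀ x, ∫ y in Iio x, lagK ℓ v q x y = Real.exp (-(E x / ℓ)) * ∫ y in Iio x, G y :=
    fun x => by rw [setIntegral_congr_fun measurableSet_Iio (hKl x), integral_const_mul]
  have hP : lagP ℓ v q ξ = (1 / (4 * ℓ)) * (Real.exp (-(E ξ / ℓ)) * (∫ y in Iio ξ, G y)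
      + Real.exp (E ξ / ℓ) * ∫ y in Ioi ξ, F y) := by
    have i1 : IntegrableOn (lagK ℓ v q ξ) (Ioi ξ) :=
      (integrableOn_congr_fun (hKr ξ) measurableSet_Ioi).2 ((hFi ξ).const_mul _)
    have i2 : IntegrableOn (lagK ℓ v q ξ) (Iic ξ) :=
      (integrableOn_Iic_iff_integrableOn_Iio (by simp)).2
        ((integrableOn_congr_fun (hKl ξ) measurableSet_Iio).2 ((hGi ξ).const_mul _))
    rw [lagP, ← intervalIntegral.integral_Iic_add_Ioi i2 i1, integral_Iic_eq_integral_Iio, hA, hB]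
  have hPx : lagPx ℓ v q = fun x => (1 / (4 * ℓ ^ 2)) *
      (Real.exp (E x / ℓ) * (∫ y in Ioi x, F y)
        - Real.exp (-(E x / ℓ)) * ∫ y in Iio x, G y) := by
    funext x
    rw [lagPx, hA, hB]
  have hexp : Real.exp (-(E ξ / ℓ)) * Real.exp (E ξ / ℓ) = 1 := by
    rw [← Real.exp_add]; simp
  rw [hPx, hP]
  have hdE := (hEd ξ).div_const ℓ
  convert! (((hdE.exp.mul (hasDerivAt_integral_Ioi hFc hFi ξ)).sub
    (hdE.neg.exp.mul (hasDerivAt_integral_Iio hGc hGi ξ))).const_mul (1 / (4 * ℓ ^ 2))) using 1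
  have e1 : Real.exp (E ξ / ℓ) * -F ξ = -h ξ := by
    simp only [hF]; linear_combination (-h ξ) * hexp
  have e2 : Real.exp (-(E ξ / ℓ)) * G ξ = h ξ := by
    simp only [hG]; linear_combination (h ξ) * hexp
  -- The boundary terms contribute `-2 h`, the terms from differentiating the weights `(e / ℓ) (A + B)`.
  rw [e1, Pi.neg_apply, e2]
  change 1 / ℓ ^ 2 * (_ * e ξ - h ξ / 2) = _
  field_simp
  ring

/-- Two functions with the same time derivative on `[0, T]` that agree at `0` agree on `[0, T]`. -/
lemma eq_of_hasDerivAt_eq {T : ℝ} {f g f' : ℝ → ℝ}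
    (hf : ∀ t ∈ Icc (0 : ℝ) T, HasDerivAt f (f' t) t)
    (hg : ∀ t ∈ Icc (0 : ℝ) T, HasDerivAt g (f' t) t) (h0 : f 0 = g 0) :
    ∀ t ∈ Icc (0 : ℝ) T, f t = g t :=
  eq_of_has_deriv_right_eq
    (fun t ht => (hf t (Ico_subset_Icc_self ht)).hasDerivWithinAt)
    (fun t ht => (hg t (Ico_subset_Icc_self ht)).hasDerivWithinAt)
    (fun t ht => (hf t ht).continuousAt.continuousWithinAt)
    (fun t ht => (hg t ht).continuousAt.continuousWithinAt) h0

/-- **Persistence identities for the semilinear Lagrangian system** (identities (4.28) and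
(4.31)): for solutions of `u_t = −ℓ²P_x`, `v_t = −P(1+cos v) − sin²(v/2)`,
`q_t = q(½ − P) sin v` with `P, P_x` given by the Lagrangian integral formulas, the
identity `u_ξ = ½ q sin v` propagates from `t = 0`; moreover, if `y_t = u` and
`y_ξ(0,·) = q(0,·)cos²(v(0,·)/2)`, then `y_ξ = q cos²(v/2)` for all times. -/
theorem lagrangian_persistence_identities (ℓ T : ℝ) (hℓ : 0 < ℓ) (hT : 0 < T)
    (u v q ut uξ utξ vt qt : ℝ → ℝ → ℝ)
    -- regularity: `C¹` in `t` and in `ξ`, with continuous (equal) mixed partials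
    (hcv : Continuous fun p : ℝ × ℝ => v p.1 p.2)
    (hcq : Continuous fun p : ℝ × ℝ => q p.1 p.2)
    (hcutξ : Continuous fun p : ℝ × ℝ => utξ p.1 p.2)
    (hut : ∀ t ∈ Set.Icc (0 : ℝ) T, ∀ ξ : ℝ, HasDerivAt (fun s => u s ξ) (ut t ξ) t)
    (huξ : ∀ t ∈ Set.Icc (0 : ℝ) T, ∀ ξ : ℝ, HasDerivAt (fun ζ => u t ζ) (uξ t ξ) ξ)
    (hvt : ∀ t ∈ Set.Icc (0 : ℝ) T, ∀ ξ : ℝ, HasDerivAt (fun s => v s ξ) (vt t ξ) t)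
    (hqt : ∀ t ∈ Set.Icc (0 : ℝ) T, ∀ ξ : ℝ, HasDerivAt (fun s => q s ξ) (qt t ξ) t)
    (hmix₁ : ∀ t ∈ Set.Icc (0 : ℝ) T, ∀ ξ : ℝ, HasDerivAt (fun ζ => ut t ζ) (utξ t ξ) ξ)
    (hmix₂ : ∀ t ∈ Set.Icc (0 : ℝ) T, ∀ ξ : ℝ, HasDerivAt (fun s => uξ s ξ) (utξ t ξ) t)
    -- `q ≥ 0` bounded, and `q sin²(v/2)` integrable in `ξ` uniformly in `t`
    (hq0 : ∀ t ∈ Set.Icc (0 : ℝ) T, ∀ ξ : ℝ, 0 ≤ q t ξ)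
    (hqb : ∃ C : ℝ, ∀ t ∈ Set.Icc (0 : ℝ) T, ∀ ξ : ℝ, q t ξ ≤ C)
    (hunif : ∃ g : ℝ → ℝ, MeasureTheory.Integrable g ∧
      ∀ t ∈ Set.Icc (0 : ℝ) T, ∀ ξ : ℝ, q t ξ * Real.sin (v t ξ / 2) ^ 2 ≤ g ξ)
    -- the semilinear system (4.16)
    (heq₁ : ∀ t ∈ Set.Icc (0 : ℝ) T, ∀ ξ : ℝ, ut t ξ = -ℓ ^ 2 * lagPx ℓ (v t) (q t) ξ)
    (heq₂ : ∀ t ∈ Set.Icc (0 : ℝ) T, ∀ ξ : ℝ,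
      vt t ξ = -(lagP ℓ (v t) (q t) ξ) * (1 + Real.cos (v t ξ)) - Real.sin (v t ξ / 2) ^ 2)
    (heq₃ : ∀ t ∈ Set.Icc (0 : ℝ) T, ∀ ξ : ℝ,
      qt t ξ = q t ξ * (1 / 2 - lagP ℓ (v t) (q t) ξ) * Real.sin (v t ξ))
    -- initial identity
    (hinit : ∀ ξ : ℝ, uξ 0 ξ = q 0 ξ * Real.sin (v 0 ξ) / 2) :
    (∀ t ∈ Set.Icc (0 : ℝ) T, ∀ ξ : ℝ, uξ t ξ = q t ξ * Real.sin (v t ξ) / 2) ∧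
    (∀ y yξ : ℝ → ℝ → ℝ,
      (∀ t ∈ Set.Icc (0 : ℝ) T, ∀ ξ : ℝ, HasDerivAt (fun s => y s ξ) (u t ξ) t) →
      (∀ t ∈ Set.Icc (0 : ℝ) T, ∀ ξ : ℝ, HasDerivAt (fun ζ => y t ζ) (yξ t ξ) ξ) →
      (∀ t ∈ Set.Icc (0 : ℝ) T, ∀ ξ : ℝ, HasDerivAt (fun s => yξ s ξ) (uξ t ξ) t) →
      (∀ ξ : ℝ, yξ 0 ξ = q 0 ξ * Real.cos (v 0 ξ / 2) ^ 2) →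
      ∀ t ∈ Set.Icc (0 : ℝ) T, ∀ ξ : ℝ, yξ t ξ = q t ξ * Real.cos (v t ξ / 2) ^ 2) := by
  obtain ⟨g, hg, hgb⟩ := hunif
  -- The mixed partial is the `ξ`-derivative of `u_t = -ℓ² P_x`, hence known in closed form.
  have hutξ : ∀ t ∈ Icc (0 : ℝ) T, ∀ ξ, utξ t ξ =
      q t ξ * Real.sin (v t ξ / 2) ^ 2 / 2
        - lagP ℓ (v t) (q t) ξ * (q t ξ * Real.cos (v t ξ / 2) ^ 2) := by
    intro t ht ξ
    have hv : Continuous (v t) := hcv.comp (by fun_prop : Continuous fun x : ℝ => (t, x))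
    have hq : Continuous (q t) := hcq.comp (by fun_prop : Continuous fun x : ℝ => (t, x))
    have hint : Integrable fun x => q t x * Real.sin (v t x / 2) ^ 2 := by
      refine hg.mono' (by fun_prop : Continuous _).aestronglyMeasurable (.of_forall fun x => ?_)
      rw [Real.norm_of_nonneg (mul_nonneg (hq0 t ht x) (sq_nonneg _))]
      exact hgb t ht x
    have hd := (hasDerivAt_lagPx hℓ hv hq (hq0 t ht) hint ξ).const_mul (-ℓ ^ 2)
    have hut' : ut t = fun x => -ℓ ^ 2 * lagPx ℓ (v t) (q t) x := funext (heq₁ t ht)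
    have hm := hmix₁ t ht ξ
    change HasDerivAt (ut t) _ _ at hm
    rw [hut'] at hm
    rw [hm.unique hd]
    field_simp
    ring
  have half : ∀ x : ℝ, Real.sin x = 2 * Real.sin (x / 2) * Real.cos (x / 2) ∧
      Real.cos x = 2 * Real.cos (x / 2) ^ 2 - 1 ∧
      Real.sin (x / 2) ^ 2 = 1 - Real.cos (x / 2) ^ 2 := fun x => by
    refine ⟨?_, ?_, Real.sin_sq _⟩
    · rw [← Real.sin_two_mul]; ring_nf
    · rw [← Real.cos_two_mul]; ring_nf
  have main : ∀ t ∈ Icc (0 : ℝ) T, ∀ ξ : ℝ, uξ t ξ = q t ξ * Real.sin (v t ξ) / 2 := by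
    intro t ht ξ
    refine eq_of_hasDerivAt_eq (f := fun s => uξ s ξ)
      (g := fun s => q s ξ * Real.sin (v s ξ) / 2) (fun s hs => hmix₂ s hs ξ)
      (fun s hs => ?_) (hinit ξ) t ht
    convert! ((hqt s hs ξ).mul (hvt s hs ξ).sin).div_const 2 using 1
    rw [hutξ s hs ξ, heq₂ s hs ξ, heq₃ s hs ξ]
    obtain ⟨h1, h2, h3⟩ := half (v s ξ)
    rw [h1, h2]
    generalize Real.sin (v s ξ / 2) = S at *
    generalize Real.cos (v s ξ / 2) = C at *
    generalize lagP ℓ (v s) (q s) ξ = P at *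
    linear_combination 2 * P * q s ξ * C ^ 2 * h3
  refine ⟨main, fun y yξ _ _ hyt hy0 t ht ξ => ?_⟩
  refine eq_of_hasDerivAt_eq (f := fun s => yξ s ξ)
    (g := fun s => q s ξ * Real.cos (v s ξ / 2) ^ 2) (fun s hs => hyt s hs ξ)
    (fun s hs => ?_) (hy0 ξ) t ht
  convert! (hqt s hs ξ).mul (((hvt s hs ξ).div_const 2).cos.pow 2) using 1
  rw [Pi.pow_apply]
  rw [main s hs ξ, heq₂ s hs ξ, heq₃ s hs ξ]
  obtain ⟨h1, h2, h3⟩ := half (v s ξ)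
  rw [h1, h2]
  generalize Real.sin (v s ξ / 2) = S at *
  generalize Real.cos (v s ξ / 2) = C at *
  generalize lagP ℓ (v s) (q s) ξ = P at *
  push_cast
  linear_combination -q s ξ * S * C * h3
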